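/- Assume Condition (★)(i)–(ii). Then for every i ∈ {1,…,n}, every initial condition (x_1,…,x_n), and every t ≥ 0, the i-th component of the chained linear cascade solution has the closed form Π_i ∘ Lin^{∘t}(x_1,…,x_n) = Σ_{j=1}^{i} (−1)^{i−j} D_{i,j} L_j^{t} pert_j(x_1,…,x_j). -/

import Mathlib

/-!
The idea is that `D_{i+1,j}` with `j ≤ i` solves the Sylvester equation
`L_{i+1} D_{i+1,j} - D_{i+1,j} L_j = C_i D_{i,j}` (`Dmat_sylvester`). In eigenbases of `L_{i+1}`
and `L_j` this equation decouples into scalar ones, whose solvability is the disjointness of the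
spectra. Given it, the right-hand side of the closed form evolves by the cascade: the terms
`C_i D_{i,j}` produced at level `i + 1` by replacing `L_{i+1} D_{i+1,j}` with `D_{i+1,j} L_j`
cancel the forcing from level `i`, the signs being opposite. At time `0` the formula is the
definition of `pert`, solved for `x_i`. The theorem follows by induction on time.
-/

open Matrix Finset Filter Topology

noncomputable section

/-- A matrix acting as a continuous linear map between Euclidean spaces. -/
def matCLM {p q : ℕ} (M : Matrix (Fin p) (Fin q) ℂ) :
    EuclideanSpace ℂ (Fin q) →L[ℂ] EuclideanSpace ℂ (Fin p) :=
  LinearMap.toContinuousLinearMap (Matrix.toEuclideanLin M)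

/-- Operator norm of a matrix induced by the Euclidean norms. -/
def opN {p q : ℕ} (M : Matrix (Fin p) (Fin q) ℂ) : ℝ := ‖matCLM M‖

/-- One step of the chained linear cascade (levels indexed from `0`). -/
def LinStep {d : ℕ → ℕ} (L : ∀ i, Matrix (Fin (d i)) (Fin (d i)) ℂ)
    (C : ∀ i, Matrix (Fin (d (i+1))) (Fin (d i)) ℂ)
    (x : ∀ i, EuclideanSpace ℂ (Fin (d i))) (i : ℕ) :
    EuclideanSpace ℂ (Fin (d i)) :=
  match i with
  | 0 => matCLM (L 0) (x 0)
  | (i+1) => matCLM (L (i+1)) (x (i+1)) + matCLM (C i) (x i)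

/-- The matrices `D_{i,j}` of the paper (levels indexed from `0`). -/
def Dmat {d : ℕ → ℕ} (L : ∀ i, Matrix (Fin (d i)) (Fin (d i)) ℂ)
    (C : ∀ i, Matrix (Fin (d (i+1))) (Fin (d i)) ℂ)
    (V : ∀ i, Matrix (Fin (d i)) (Fin (d i)) ℂ)
    (ev : ∀ i, Fin (d i) → ℂ) : ∀ i j : ℕ, Matrix (Fin (d i)) (Fin (d j)) ℂ
  | 0, 0 => 1
  | 0, _ + 1 => 0
  | i + 1, j =>
    if h : j = i + 1 then by subst h; exact 1
    else
      (L (i+1))⁻¹ * V (i+1) *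
        Matrix.of (fun ℓ m =>
          ((V (i+1))⁻¹ * C i * Dmat L C V ev i j * V j) ℓ m
            * (1 - ev j m / ev (i+1) ℓ)⁻¹) * (V j)⁻¹

/-- The perturbation maps `pert_i` of the paper (levels indexed from `0`). -/
def pert {d : ℕ → ℕ} (L : ∀ i, Matrix (Fin (d i)) (Fin (d i)) ℂ)
    (C : ∀ i, Matrix (Fin (d (i+1))) (Fin (d i)) ℂ)
    (V : ∀ i, Matrix (Fin (d i)) (Fin (d i)) ℂ)
    (ev : ∀ i, Fin (d i) → ℂ)
    (x : ∀ k, EuclideanSpace ℂ (Fin (d k))) : ∀ i : ℕ, EuclideanSpace ℂ (Fin (d i))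
  | 0 => x 0
  | i + 1 => x (i+1) + ∑ j ∈ (Finset.range (i+1)).attach,
      ((-1 : ℂ) ^ (i - j.1)) • matCLM (Dmat L C V ev (i+1) j.1) (pert L C V ev x j.1)
  termination_by i => i
  decreasing_by exact Finset.mem_range.mp j.2

/-- The `s`-th principal eigenfunction of component system `i`. -/
def psi {d : ℕ → ℕ} (V : ∀ i, Matrix (Fin (d i)) (Fin (d i)) ℂ) (i : ℕ) (s : Fin (d i)) :
    EuclideanSpace ℂ (Fin (d i)) →L[ℂ] ℂ :=
  (EuclideanSpace.proj s).comp (matCLM (V i)⁻¹)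

lemma matCLM_mul {p q r : ℕ} (M : Matrix (Fin p) (Fin q) ℂ) (N : Matrix (Fin q) (Fin r) ℂ)
    (x : EuclideanSpace ℂ (Fin r)) : matCLM (M * N) x = matCLM M (matCLM N x) := by
  simp [matCLM, Matrix.toLpLin_apply, Matrix.mulVec_mulVec]

lemma matCLM_one {p : ℕ} (x : EuclideanSpace ℂ (Fin p)) :
    matCLM (1 : Matrix (Fin p) (Fin p) ℂ) x = x := by
  simp [matCLM]

lemma matCLM_sub {p q : ℕ} (M N : Matrix (Fin p) (Fin q) ℂ) (x : EuclideanSpace ℂ (Fin q)) :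
    matCLM (M - N) x = matCLM M x - matCLM N x := by
  simp [matCLM]

/-- The Sylvester equation `A X - X B = R` is solved, for diagonalizable `A` and `B` with
disjoint spectra, by entrywise division in the eigenbases. -/
lemma sylvester {p q : ℕ} {A P : Matrix (Fin p) (Fin p) ℂ} {B Q : Matrix (Fin q) (Fin q) ℂ}
    {a : Fin p → ℂ} {b : Fin q → ℂ} (hA : A = P * Matrix.diagonal a * P⁻¹)
    (hB : B = Q * Matrix.diagonal b * Q⁻¹) (hP : IsUnit P) (hQ : IsUnit Q) (hAu : IsUnit A)
    (hab : ∀ l m, a l ≠ b m) (R : Matrix (Fin p) (Fin q) ℂ) :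
    let X := A⁻¹ * P * Matrix.of (fun l m => (P⁻¹ * R * Q) l m * (1 - b m / a l)⁻¹) * Q⁻¹
    A * X - X * B = R := by
  intro X
  rw [Matrix.isUnit_iff_isUnit_det] at hP hQ hAu
  have ha : ∀ l, a l ≠ 0 := by
    have h := hAu.ne_zero
    rw [hA, Matrix.det_mul, Matrix.det_mul, Matrix.det_diagonal] at h
    have h' := right_ne_zero_of_mul (left_ne_zero_of_mul h)
    exact fun l => Finset.prod_ne_zero_iff.mp h' l (Finset.mem_univ l)
  have hinv : A⁻¹ * P = P * Matrix.diagonal (fun l => (a l)⁻¹) := by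
    have h : A * (P * Matrix.diagonal (fun l => (a l)⁻¹)) = P := by
      rw [hA]
      simp only [Matrix.mul_assoc]
      rw [Matrix.nonsing_inv_mul_cancel_left _ _ hP, Matrix.diagonal_mul_diagonal]
      simp [ha]
    calc A⁻¹ * P = A⁻¹ * (A * (P * Matrix.diagonal (fun l => (a l)⁻¹))) := by rw [h]
      _ = _ := Matrix.nonsing_inv_mul_cancel_left _ _ hAu
  set E : Matrix (Fin p) (Fin q) ℂ :=
    Matrix.of (fun l m => (P⁻¹ * R * Q) l m * (1 - b m / a l)⁻¹) with hE
  have hX : X = A⁻¹ * P * E * Q⁻¹ := rfl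
  -- The equation in the eigenbases, which is scalar in each entry.
  have hdec : E - Matrix.diagonal (fun l => (a l)⁻¹) * E * Matrix.diagonal b = P⁻¹ * R * Q := by
    ext l m
    have h1 : 1 - b m / a l ≠ 0 := by
      intro h
      apply hab l m
      have := ha l
      field_simp at h
      linear_combination h
    rw [Matrix.sub_apply, Matrix.mul_diagonal, Matrix.diagonal_mul, hE, Matrix.of_apply]
    calc _ = (P⁻¹ * R * Q) l m * ((1 - b m / a l)⁻¹ * (1 - b m / a l)) := by ring
      _ = _ := by rw [inv_mul_cancel₀ h1, mul_one]
  have hAX : A * X = P * E * Q⁻¹ := by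
    rw [hX]
    simp only [Matrix.mul_assoc]
    rw [Matrix.mul_nonsing_inv_cancel_left _ _ hAu]
  have hXB : X * B = P * (Matrix.diagonal (fun l => (a l)⁻¹) * E * Matrix.diagonal b) * Q⁻¹ := by
    rw [hX, hinv, hB]
    simp only [Matrix.mul_assoc]
    rw [Matrix.nonsing_inv_mul_cancel_left _ _ hQ]
  rw [hAX, hXB, ← Matrix.sub_mul, ← Matrix.mul_sub, hdec]
  simp only [Matrix.mul_assoc]
  rw [Matrix.mul_nonsing_inv_cancel_left _ _ hP, Matrix.mul_nonsing_inv _ hQ, Matrix.mul_one]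

section Cascade

variable {d : ℕ → ℕ} (L : ∀ i, Matrix (Fin (d i)) (Fin (d i)) ℂ)
  (C : ∀ i, Matrix (Fin (d (i+1))) (Fin (d i)) ℂ)
  (V : ∀ i, Matrix (Fin (d i)) (Fin (d i)) ℂ) (ev : ∀ i, Fin (d i) → ℂ)

lemma Dmat_self (i : ℕ) : Dmat L C V ev i i = 1 := by
  cases i <;> simp [Dmat]

lemma Dmat_sylvester (hdiag : ∀ i, L i = V i * Matrix.diagonal (ev i) * (V i)⁻¹)
    (hV : ∀ i, IsUnit (V i)) (hLu : ∀ i, IsUnit (L i))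
    (hsp : ∀ i j : ℕ, i ≠ j → ∀ l m, ev i l ≠ ev j m) {i j : ℕ} (hij : j ≠ i + 1) :
    L (i+1) * Dmat L C V ev (i+1) j - Dmat L C V ev (i+1) j * L j = C i * Dmat L C V ev i j := by
  have h := sylvester (hdiag (i+1)) (hdiag j) (hV _) (hV _) (hLu _) (hsp _ _ hij.symm)
    (C i * Dmat L C V ev i j)
  rw [Dmat, dif_neg hij]
  simpa only [Matrix.mul_assoc] using h

/-- The right-hand side of the closed form, as a function of time and level. -/
def closedForm (x : ∀ k, EuclideanSpace ℂ (Fin (d k))) (t i : ℕ) : EuclideanSpace ℂ (Fin (d i)) :=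
  ∑ j ∈ Finset.range (i+1),
    ((-1 : ℂ) ^ (i - j)) • matCLM (Dmat L C V ev i j * (L j) ^ t) (pert L C V ev x j)

lemma closedForm_zero (x : ∀ k, EuclideanSpace ℂ (Fin (d k))) :
    closedForm L C V ev x 0 = x := by
  funext i
  cases i with
  | zero => simp [closedForm, Dmat, pert, matCLM_one]
  | succ i =>
    have hp : pert L C V ev x (i+1) = x (i+1) + ∑ j ∈ Finset.range (i+1),
        ((-1 : ℂ) ^ (i - j)) • matCLM (Dmat L C V ev (i+1) j) (pert L C V ev x j) := by
      rw [pert, Finset.sum_attach (Finset.range (i+1)) (fun j =>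
        ((-1 : ℂ) ^ (i - j)) • matCLM (Dmat L C V ev (i+1) j) (pert L C V ev x j))]
    rw [closedForm, Finset.sum_range_succ]
    simp only [pow_zero, Matrix.mul_one, Nat.sub_self, one_smul, Dmat_self, matCLM_one]
    rw [hp, add_left_comm, ← Finset.sum_add_distrib, Finset.sum_eq_zero, add_zero]
    intro j hj
    rw [Nat.succ_sub (Nat.lt_succ_iff.mp (Finset.mem_range.mp hj)), pow_succ, ← add_smul]
    simp

lemma closedForm_succ (hdiag : ∀ i, L i = V i * Matrix.diagonal (ev i) * (V i)⁻¹)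
    (hV : ∀ i, IsUnit (V i)) (hLu : ∀ i, IsUnit (L i))
    (hsp : ∀ i j : ℕ, i ≠ j → ∀ l m, ev i l ≠ ev j m)
    (x : ∀ k, EuclideanSpace ℂ (Fin (d k))) (t : ℕ) :
    closedForm L C V ev x (t+1) = LinStep L C (closedForm L C V ev x t) := by
  funext i
  cases i with
  | zero => simp [closedForm, LinStep, Dmat, pow_succ', matCLM_mul, matCLM_one]
  | succ i =>
    rw [LinStep, closedForm, closedForm, closedForm, Finset.sum_range_succ,
      Finset.sum_range_succ _ (i+1), map_add, map_sum, map_sum, add_right_comm,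
      ← Finset.sum_add_distrib]
    congr 1
    · refine Finset.sum_congr rfl fun j hj => ?_
      have hj' := Finset.mem_range.mp hj
      have hs : Dmat L C V ev (i+1) j * L j ^ (t+1)
          = L (i+1) * (Dmat L C V ev (i+1) j * L j ^ t)
            - C i * (Dmat L C V ev i j * L j ^ t) := by
        rw [← Matrix.mul_assoc (C i),
          ← Dmat_sylvester L C V ev hdiag hV hLu hsp hj'.ne, Matrix.sub_mul, pow_succ']
        simp only [Matrix.mul_assoc, sub_sub_cancel]
      rw [hs, matCLM_sub, matCLM_mul (L (i+1)), matCLM_mul (C i), map_smul, map_smul,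
        Nat.succ_sub (Nat.lt_succ_iff.mp hj'), pow_succ]
      module
    · simp [Dmat_self, pow_succ', matCLM_mul]

end Cascade

/-- closed form for the chained linear cascade under Condition (★)(i)–(ii).
Levels are indexed from `0` (the paper's level `i` is `i-1` here), so the paper's
`Π_i ∘ Lin^{∘t}(x) = ∑_{j=1}^{i} (−1)^{i−j} D_{i,j} L_j^t pert_j(x_1,…,x_j)` becomes a sum
over `j ∈ {0,…,i}`. -/
theorem stmt2 {d : ℕ → ℕ} (L : ∀ i, Matrix (Fin (d i)) (Fin (d i)) ℂ)
    (C : ∀ i, Matrix (Fin (d (i+1))) (Fin (d i)) ℂ)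
    (V : ∀ i, Matrix (Fin (d i)) (Fin (d i)) ℂ)
    (ev : ∀ i, Fin (d i) → ℂ)
    (hdiag : ∀ i, L i = V i * Matrix.diagonal (ev i) * (V i)⁻¹)
    (hV : ∀ i, IsUnit (V i))
    (hLu : ∀ i, IsUnit (L i))
    (hsp : ∀ i j : ℕ, i ≠ j → ∀ ℓ m, ev i ℓ ≠ ev j m)
    (x : ∀ i, EuclideanSpace ℂ (Fin (d i))) (i t : ℕ) :
    (LinStep L C)^[t] x i
      = ∑ j ∈ Finset.range (i+1),
          ((-1 : ℂ) ^ (i - j)) • matCLM (Dmat L C V ev i j * (L j) ^ t) (pert L C V ev x j) := by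
  have h : ∀ t, (LinStep L C)^[t] x = closedForm L C V ev x t := by
    intro t
    induction t with
    | zero => exact (closedForm_zero L C V ev x).symm
    | succ t ih =>
      rw [Function.iterate_succ_apply', ih, closedForm_succ L C V ev hdiag hV hLu hsp]
  exact congrFun (h t) i
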